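/- arXiv:math/0503468 — 5 statements merged into one kernel-verified Lean document; each statement's English description precedes it below -/
import Mathlib

section
/- Let G and H be groups, let p, q ≥ 1, and let ρ : G →* Matrix.unitaryGroup (Fin p) ℂ and σ : H →* Matrix.unitaryGroup (Fin q) ℂ be irreducible unitary representations. Then the external tensor product representation ρ ⊠ σ of G × H, of dimension p·q, is irreducible: the only ℂ-submodules of ℂ^(p·q) invariant under all matrices (ρ ⊠ σ)(g,h) are ⊥ and ⊤. -/
/-!
Let `ρ` and `σ` be irreducible representations on `V` and `W` over an algebraically closed field
`k`, with `V` finite-dimensional. By Schur's lemma the commutant of `ρ` is `k`, so the Jacobson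
density theorem makes `k[G] → End V` surjective (Burnside's theorem). Hence a subspace `U` of
`V ⊗ W` invariant under `G × H` is stable under `f ⊗ 1` for every `f ∈ End V`. If `U` contains some
`u ≠ 0`, contracting `u` with a suitable functional `φ` on `V` gives `w ≠ 0` in `W`, and applying
the rank-one endomorphisms `φ(·) v` to the first factor of `u` gives `v ⊗ w ∈ U` for all `v`. The
vectors `w` with `V ⊗ w ⊆ U` thus form a nonzero `H`-invariant subspace of `W`, which must be `W`,
and so `U = V ⊗ W`. In coordinates, `ℂᵖ ⊗ ℂ^q ≃ ℂ^(p * q)` turns `ρ g ⊗ σ h` into the Kronecker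
product.
-/

open Matrix Kronecker

/-- A submodule `W` of `ℂⁿ` is invariant under the unitary representation `ρ`. -/
def RepInvariant {G : Type*} [Group G] {n : ℕ} (ρ : G →* Matrix.unitaryGroup (Fin n) ℂ)
    (W : Submodule ℂ (Fin n → ℂ)) : Prop :=
  ∀ (g : G), ∀ v ∈ W, (ρ g).val.mulVec v ∈ W

/-- A unitary representation is irreducible if it is at least one-dimensional and the
only invariant submodules are `⊥` and `⊤`. -/
def RepIrreducible {G : Type*} [Group G] {n : ℕ}
    (ρ : G →* Matrix.unitaryGroup (Fin n) ℂ) : Prop :=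
  1 ≤ n ∧ ∀ W : Submodule ℂ (Fin n → ℂ), RepInvariant ρ W → W = ⊥ ∨ W = ⊤

/-- Unitary equivalence of two `n`-dimensional unitary representations. -/
def UnitarilyEquivalent {G : Type*} [Group G] {n : ℕ}
    (ρ ρ' : G →* Matrix.unitaryGroup (Fin n) ℂ) : Prop :=
  ∃ A : Matrix.unitaryGroup (Fin n) ℂ, ∀ g : G, ρ' g = A * ρ g * A⁻¹

lemma kronecker_conjTranspose {p q : ℕ} (A : Matrix (Fin p) (Fin p) ℂ)
    (B : Matrix (Fin q) (Fin q) ℂ) : (A ⊗ₖ B)ᴴ = Aᴴ ⊗ₖ Bᴴ := by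
  ext ⟨i, j⟩ ⟨k, l⟩
  simp [Matrix.conjTranspose_apply, mul_comm]

/-- The Kronecker product of unitary matrices, reindexed to be of size `p * q`, is unitary. -/
def kroneckerUnitary {p q : ℕ} (A : Matrix.unitaryGroup (Fin p) ℂ)
    (B : Matrix.unitaryGroup (Fin q) ℂ) : Matrix.unitaryGroup (Fin (p * q)) ℂ :=
  ⟨Matrix.reindex finProdFinEquiv finProdFinEquiv (A.val ⊗ₖ B.val), by
    constructor
    · show star (Matrix.reindex finProdFinEquiv finProdFinEquiv (A.val ⊗ₖ B.val)) *
        (Matrix.reindex finProdFinEquiv finProdFinEquiv (A.val ⊗ₖ B.val)) = 1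
      have hs : star (Matrix.reindex finProdFinEquiv finProdFinEquiv (A.val ⊗ₖ B.val)) =
          Matrix.reindex finProdFinEquiv finProdFinEquiv ((star A.val) ⊗ₖ (star B.val)) := by
        show (Matrix.reindex finProdFinEquiv finProdFinEquiv (A.val ⊗ₖ B.val))ᴴ = _
        rw [Matrix.reindex_apply, Matrix.reindex_apply, Matrix.conjTranspose_submatrix,
          Matrix.star_eq_conjTranspose, Matrix.star_eq_conjTranspose, ← kronecker_conjTranspose]
      rw [hs, Matrix.reindex_apply, Matrix.reindex_apply, Matrix.submatrix_mul_equiv,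
        ← Matrix.mul_kronecker_mul]
      have h1 : star A.val * A.val = 1 := A.2.1
      have h2 : star B.val * B.val = 1 := B.2.1
      rw [h1, h2, Matrix.one_kronecker_one, Matrix.submatrix_one_equiv]
    · show (Matrix.reindex finProdFinEquiv finProdFinEquiv (A.val ⊗ₖ B.val)) *
        star (Matrix.reindex finProdFinEquiv finProdFinEquiv (A.val ⊗ₖ B.val)) = 1
      have hs : star (Matrix.reindex finProdFinEquiv finProdFinEquiv (A.val ⊗ₖ B.val)) =
          Matrix.reindex finProdFinEquiv finProdFinEquiv ((star A.val) ⊗ₖ (star B.val)) := by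
        show (Matrix.reindex finProdFinEquiv finProdFinEquiv (A.val ⊗ₖ B.val))ᴴ = _
        rw [Matrix.reindex_apply, Matrix.reindex_apply, Matrix.conjTranspose_submatrix,
          Matrix.star_eq_conjTranspose, Matrix.star_eq_conjTranspose, ← kronecker_conjTranspose]
      rw [hs, Matrix.reindex_apply, Matrix.reindex_apply, Matrix.submatrix_mul_equiv,
        ← Matrix.mul_kronecker_mul]
      have h1 : A.val * star A.val = 1 := A.2.2
      have h2 : B.val * star B.val = 1 := B.2.2
      rw [h1, h2, Matrix.one_kronecker_one, Matrix.submatrix_one_equiv]⟩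

/-- The external tensor product of unitary representations. -/
def extTensor {G H : Type*} [Group G] [Group H] {p q : ℕ}
    (ρ : G →* Matrix.unitaryGroup (Fin p) ℂ) (σ : H →* Matrix.unitaryGroup (Fin q) ℂ) :
    (G × H) →* Matrix.unitaryGroup (Fin (p * q)) ℂ where
  toFun x := kroneckerUnitary (ρ x.1) (σ x.2)
  map_one' := by
    apply Subtype.ext
    show Matrix.reindex finProdFinEquiv finProdFinEquiv ((ρ 1).val ⊗ₖ (σ 1).val) = 1
    rw [map_one ρ, map_one σ]
    show Matrix.reindex finProdFinEquiv finProdFinEquiv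
      ((1 : Matrix (Fin p) (Fin p) ℂ) ⊗ₖ (1 : Matrix (Fin q) (Fin q) ℂ)) = 1
    rw [Matrix.one_kronecker_one, Matrix.reindex_apply, Matrix.submatrix_one_equiv]
  map_mul' x y := by
    apply Subtype.ext
    show Matrix.reindex finProdFinEquiv finProdFinEquiv ((ρ (x.1 * y.1)).val ⊗ₖ (σ (x.2 * y.2)).val)
      = Matrix.reindex finProdFinEquiv finProdFinEquiv ((ρ x.1).val ⊗ₖ (σ x.2).val) *
        Matrix.reindex finProdFinEquiv finProdFinEquiv ((ρ y.1).val ⊗ₖ (σ y.2).val)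
    rw [map_mul ρ, map_mul σ]
    rw [Matrix.reindex_apply, Matrix.reindex_apply, Matrix.reindex_apply,
      Matrix.submatrix_mul_equiv, ← Matrix.mul_kronecker_mul]
    rfl

/-- Transport of a unitary representation along an equality of dimensions. -/
def transportRep {G : Type*} [Group G] {m n : ℕ} (h : m = n)
    (ρ : G →* Matrix.unitaryGroup (Fin m) ℂ) : G →* Matrix.unitaryGroup (Fin n) ℂ :=
  h ▸ ρ

open scoped TensorProduct MonoidAlgebra

section Contraction

open Module TensorProduct

variable {R M N : Type*} [CommSemiring R] [AddCommMonoid M] [Module R M] [AddCommMonoid N]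
  [Module R N]

lemma rTensor_smulRight_apply (φ : Dual R M) (m : M) (u : M ⊗[R] N) :
    (φ.smulRight m).rTensor N u = m ⊗ₜ TensorProduct.lid R N (φ.rTensor N u) := by
  induction u with
  | zero => simp
  | tmul x n => simp [smul_tmul]
  | add x y hx hy => simp [hx, hy, tmul_add]

lemma exists_lid_rTensor_ne_zero [Free R M] {u : M ⊗[R] N} (hu : u ≠ 0) :
    ∃ φ : Dual R M, TensorProduct.lid R N (φ.rTensor N u) ≠ 0 := by
  classical
  by_contra! h
  refine hu ((equivFinsuppOfBasisLeft (Free.chooseBasis R M)).injective ?_)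
  ext i
  simp [equivFinsuppOfBasisLeft_apply, h]

lemma exists_ne_zero_forall_tmul_mem [Free R M] {U : Submodule R (M ⊗[R] N)} (hU₀ : U ≠ ⊥)
    (hU : ∀ f : End R M, ∀ u ∈ U, f.rTensor N u ∈ U) :
    ∃ n : N, n ≠ 0 ∧ ∀ m : M, m ⊗ₜ n ∈ U := by
  obtain ⟨u, hu, hu₀⟩ := U.exists_mem_ne_zero_of_ne_bot hU₀
  obtain ⟨φ, hφ⟩ := exists_lid_rTensor_ne_zero hu₀
  exact ⟨_, hφ, fun m ↦ rTensor_smulRight_apply φ m u ▸ hU _ u hu⟩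

end Contraction

section ExternalTensorProduct

variable {R G H M N : Type*} [CommSemiring R] [Monoid G] [Monoid H]
  [AddCommMonoid M] [Module R M] [AddCommMonoid N] [Module R N]

/-- The external tensor product `ρ ⊠ σ` of linear representations of `G` and `H`, encoded as the
tensor product of their pullbacks to `G × H`. -/
noncomputable def externalTprod (ρ : Representation R G M) (σ : Representation R H N) :
    Representation R (G × H) (M ⊗[R] N) :=
  Representation.tprod (ρ.comp (MonoidHom.fst G H)) (σ.comp (MonoidHom.snd G H))

lemma externalTprod_apply (ρ : Representation R G M) (σ : Representation R H N) (x : G × H) :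
    externalTprod ρ σ x = TensorProduct.map (ρ x.1) (σ x.2) := rfl

lemma externalTprod_mk_one (ρ : Representation R G M) (σ : Representation R H N) (g : G) :
    externalTprod ρ σ (g, 1) = (ρ g).rTensor N := by
  rw [externalTprod_apply, map_one]
  rfl

lemma externalTprod_one_mk (ρ : Representation R G M) (σ : Representation R H N) (h : H) :
    externalTprod ρ σ (1, h) = (σ h).lTensor M := by
  rw [externalTprod_apply, map_one]
  rfl

lemma rTensor_asAlgebraHom_mem {ρ : Representation R G M} {U : Submodule R (M ⊗[R] N)}
    (hU : ∀ g, ∀ u ∈ U, (ρ g).rTensor N u ∈ U) (r : R[G]) {u : M ⊗[R] N} (hu : u ∈ U) :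
    (ρ.asAlgebraHom r).rTensor N u ∈ U := by
  induction r using MonoidAlgebra.induction_linear with
  | zero => simp
  | add r s hr hs => simpa using U.add_mem hr hs
  | single g c => simpa using U.smul_mem c (hU g u hu)

end ExternalTensorProduct

section Irreducible

open Module

variable {k G H V W : Type*} [Field k] [Monoid G] [Monoid H]
  [AddCommGroup V] [Module k V] [AddCommGroup W] [Module k W]

lemma isIrreducible_iff_submodule (ρ : Representation k G V) :
    ρ.IsIrreducible ↔ Nontrivial V ∧
      ∀ U : Submodule k V, (∀ g, ∀ v ∈ U, ρ g v ∈ U) → U = ⊥ ∨ U = ⊤ := by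
  constructor
  · intro hρ
    refine ⟨IsSimpleModule.nontrivial k[G] ρ.asModule, fun U hU ↦ ?_⟩
    exact (eq_bot_or_eq_top (⟨U, hU⟩ : Subrepresentation ρ)).imp
      (congrArg Subrepresentation.toSubmodule) (congrArg Subrepresentation.toSubmodule)
  · rintro ⟨_, hρ⟩
    exact
      { exists_pair_ne := ⟨⊥, ⊤, fun h ↦
          bot_ne_top (α := Submodule k V) (congrArg Subrepresentation.toSubmodule h)⟩
        eq_bot_or_eq_top := fun U ↦ (hρ U.toSubmodule U.apply_mem_toSubmodule).imp
          (fun h ↦ Subrepresentation.toSubmodule_injective h)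
          (fun h ↦ Subrepresentation.toSubmodule_injective h) }

lemma isIrreducible_of_equiv {ρ : Representation k G V} {σ : Representation k G W}
    (e : ρ.Equiv σ) [ρ.IsIrreducible] : σ.IsIrreducible := by
  rw [Representation.irreducible_iff_isSimpleModule_asModule]
  exact IsSimpleModule.congr <| .ofBijective
    (Representation.IntertwiningMap.equivLinearMapAsModule _ _ e.symm.toIntertwiningMap)
    e.symm.toLinearEquiv.bijective

theorem asAlgebraHom_surjective_of_isIrreducible [IsAlgClosed k] [FiniteDimensional k V]
    (ρ : Representation k G V) [ρ.IsIrreducible] : Function.Surjective ρ.asAlgebraHom := by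
  intro f
  -- By Schur's lemma `End k[G] V = k`, so `f` commutes with the commutant of `ρ`.
  let F : End (End k[G] ρ.asModule) ρ.asModule :=
    { toFun := fun v ↦ f v
      map_add' := f.map_add
      map_smul' := fun a v ↦ by
        obtain ⟨c, rfl⟩ := (IsSimpleModule.algebraMap_end_bijective_of_isAlgClosed k).surjective a
        exact f.map_smul c v }
  have : Module.Finite (End k[G] ρ.asModule) ρ.asModule := .of_restrictScalars_finite k _ _
  obtain ⟨r, hr⟩ := Module.Finite.toModuleEnd_moduleEnd_surjective (R := k[G]) F
  exact ⟨r, LinearMap.ext fun v ↦ congr($hr v)⟩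

theorem externalTprod_isIrreducible_of_surjective [Nontrivial V] {ρ : Representation k G V}
    (hρ : Function.Surjective ρ.asAlgebraHom) (σ : Representation k H W) [hσ : σ.IsIrreducible] :
    (externalTprod ρ σ).IsIrreducible := by
  obtain ⟨_, eq_bot_or_eq_top⟩ := (isIrreducible_iff_submodule σ).1 hσ
  refine (isIrreducible_iff_submodule _).2 ⟨inferInstance, fun U hU ↦ ?_⟩
  refine or_iff_not_imp_left.2 fun hU₀ ↦ ?_
  have rTensor_mem : ∀ f : End k V, ∀ u ∈ U, f.rTensor W u ∈ U :=
    hρ.forall.2 fun r _ ↦ rTensor_asAlgebraHom_mem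
      (fun g u hu ↦ externalTprod_mk_one ρ σ g ▸ hU (g, 1) u hu) r
  obtain ⟨w, hw₀, hw⟩ := exists_ne_zero_forall_tmul_mem hU₀ rTensor_mem
  let S : Submodule k W := ⨅ v : V, U.comap (TensorProduct.mk k V W v)
  have mem_S {x : W} : x ∈ S ↔ ∀ v, v ⊗ₜ x ∈ U := by simp [S]
  have S_invariant : ∀ h, ∀ x ∈ S, σ h x ∈ S := fun h x hx ↦ mem_S.2 fun v ↦ by
    simpa [externalTprod_one_mk] using hU (1, h) _ (mem_S.1 hx v)
  have S_ne_bot : S ≠ ⊥ := S.ne_bot_iff.2 ⟨w, mem_S.2 hw, hw₀⟩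
  have S_eq_top : S = ⊤ := (eq_bot_or_eq_top S S_invariant).resolve_left S_ne_bot
  rw [eq_top_iff, ← TensorProduct.span_tmul_eq_top, Submodule.span_le]
  rintro _ ⟨v, x, rfl⟩
  exact mem_S.1 (S_eq_top ▸ Submodule.mem_top) v

theorem extTensor_irreducible_general [IsAlgClosed k] [FiniteDimensional k V]
    (ρ : Representation k G V) (σ : Representation k H W) [hρ : ρ.IsIrreducible]
    [σ.IsIrreducible] : (externalTprod ρ σ).IsIrreducible :=
  have := ((isIrreducible_iff_submodule ρ).1 hρ).1
  externalTprod_isIrreducible_of_surjective (asAlgebraHom_surjective_of_isIrreducible ρ) σ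

end Irreducible

section Kronecker

variable {R m n : Type*} [CommRing R] [Fintype m] [DecidableEq m] [Fintype n] [DecidableEq n]

/-- The identification of `Rᵐ ⊗ Rⁿ` with `Rᵐˣⁿ` through the standard bases, under which tensor
products of linear maps become Kronecker products of matrices. -/
noncomputable def piTensorEquiv (R m n : Type*) [CommSemiring R] [Finite m] [Finite n] :
    (m → R) ⊗[R] (n → R) ≃ₗ[R] (m × n → R) :=
  ((Pi.basisFun R m).tensorProduct (Pi.basisFun R n)).equivFun

lemma piTensorEquiv_map_toLin' (A : Matrix m m R) (B : Matrix n n R)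
    (u : (m → R) ⊗[R] (n → R)) :
    piTensorEquiv R m n (TensorProduct.map A.toLin' B.toLin' u) =
      (A ⊗ₖ B).toLin' (piTensorEquiv R m n u) := by
  have map_eq : TensorProduct.map A.toLin' B.toLin' = Matrix.toLin _ _ (A ⊗ₖ B) :=
    (Matrix.toLin_kronecker (Pi.basisFun R m) (Pi.basisFun R n) (Pi.basisFun R m)
      (Pi.basisFun R n) A B).symm
  simp only [map_eq, piTensorEquiv, Module.Basis.equivFun_apply, Matrix.repr_toLin,
    Matrix.toLin'_apply]

end Kronecker

section Unitary

/-- The linear representation on `ℂⁿ` underlying an `n`-dimensional unitary representation, with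
matrices acting by `mulVec`. -/
noncomputable def unitaryToRepresentation {G : Type*} [Monoid G] {n : ℕ}
    (ρ : G →* Matrix.unitaryGroup (Fin n) ℂ) : Representation ℂ G (Fin n → ℂ) :=
  (Matrix.toLinAlgEquiv' : _ ≃ₐ[ℂ] _).toMonoidHom.comp
    ((Matrix.unitaryGroup (Fin n) ℂ).subtype.comp ρ)

lemma unitaryToRepresentation_apply {G : Type*} [Monoid G] {n : ℕ}
    (ρ : G →* Matrix.unitaryGroup (Fin n) ℂ) (g : G) :
    unitaryToRepresentation ρ g = Matrix.toLin' (ρ g).val := rfl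

variable {G H : Type*} [Group G] [Group H] {n p q : ℕ}

lemma repIrreducible_iff_isIrreducible (ρ : G →* Matrix.unitaryGroup (Fin n) ℂ) :
    RepIrreducible ρ ↔ (unitaryToRepresentation ρ).IsIrreducible := by
  have one_le_iff : 1 ≤ n ↔ Nontrivial (Fin n → ℂ) := by
    rw [← Module.finrank_pos_iff (R := ℂ), Module.finrank_fin_fun, Nat.one_le_iff_ne_zero,
      Nat.pos_iff_ne_zero]
  rw [isIrreducible_iff_submodule, ← one_le_iff]
  rfl

lemma unitaryToRepresentation_extTensor_apply (ρ : G →* Matrix.unitaryGroup (Fin p) ℂ)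
    (σ : H →* Matrix.unitaryGroup (Fin q) ℂ) (x : G × H) :
    unitaryToRepresentation (extTensor ρ σ) x =
      Matrix.toLin' (Matrix.reindex finProdFinEquiv finProdFinEquiv
        ((ρ x.1).val ⊗ₖ (σ x.2).val)) := rfl

/-- The external tensor product of the underlying linear representations is the linear
representation underlying `extTensor ρ σ`, once `Fin p × Fin q` is numbered by
`finProdFinEquiv`. -/
noncomputable def extTensorEquiv (ρ : G →* Matrix.unitaryGroup (Fin p) ℂ)
    (σ : H →* Matrix.unitaryGroup (Fin q) ℂ) :
    (externalTprod (unitaryToRepresentation ρ) (unitaryToRepresentation σ)).Equiv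
      (unitaryToRepresentation (extTensor ρ σ)) :=
  .mk (piTensorEquiv ℂ (Fin p) (Fin q) ≪≫ₗ LinearEquiv.funCongrLeft ℂ ℂ finProdFinEquiv.symm)
    fun x ↦ LinearMap.ext fun u ↦ by
      rw [unitaryToRepresentation_extTensor_apply, Matrix.toLin'_reindex, externalTprod_apply]
      simp only [unitaryToRepresentation_apply, LinearMap.comp_apply, LinearEquiv.coe_coe,
        LinearEquiv.trans_apply, piTensorEquiv_map_toLin', ← LinearEquiv.funCongrLeft_symm,
        LinearEquiv.apply_symm_apply]

end Unitary

/-- The external tensor product of irreducible unitary representations of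
`G` and `H` is an irreducible unitary representation of `G × H`. -/
theorem extTensor_irreducible {G H : Type*} [Group G] [Group H] {p q : ℕ}
    (hp : 1 ≤ p) (hq : 1 ≤ q)
    (ρ : G →* Matrix.unitaryGroup (Fin p) ℂ) (σ : H →* Matrix.unitaryGroup (Fin q) ℂ)
    (hρ : RepIrreducible ρ) (hσ : RepIrreducible σ) :
    RepIrreducible (extTensor ρ σ) := by
  rw [repIrreducible_iff_isIrreducible] at hρ hσ ⊢
  have := extTensor_irreducible_general (unitaryToRepresentation ρ) (unitaryToRepresentation σ)
  exact isIrreducible_of_equiv (extTensorEquiv ρ σ)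
end

section
/- Let G and H be groups, n ≥ 1, and let ρ : (G × H) →* Matrix.unitaryGroup (Fin n) ℂ be an irreducible unitary representation. Then there exist p, q ≥ 1 with p * q = n, an irreducible unitary representation σ : G →* Matrix.unitaryGroup (Fin p) ℂ, and an irreducible unitary representation τ : H →* Matrix.unitaryGroup (Fin q) ℂ, such that ρ is unitarily equivalent to the external tensor product σ ⊠ τ (transported along Fin (p*q) ≃ Fin n). -/
open Matrix Kronecker

/-!
Restrict `ρ` to `G`, choose an irreducible constituent `σ` of this restriction, and then an
irreducible constituent `τ` of the representation of `H` on `Hom_G(σ, ρ)`. Evaluation `u ⊗ X ↦ X u`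
is a nonzero intertwiner from `σ ⊠ τ` to `ρ`. Both representations have only scalars in their
commutant: `ρ` by Schur's lemma, and `σ ⊠ τ` by Schur's lemma for `σ` and then for `τ`. Hence
`U * Uᴴ` and `Uᴴ * U` are scalar for every intertwiner `U` between them, so a nonzero `U` is a
multiple of a unitary matrix.
-/

section OrthonormalColumns

variable {𝕜 ι κ : Type*} [RCLike 𝕜] [Fintype ι]

lemma conjTranspose_mul_self_of_orthonormal [DecidableEq κ] {b : κ → EuclideanSpace 𝕜 ι}
    (hb : Orthonormal 𝕜 b) :
    (Matrix.of fun i j => b j i)ᴴ * (Matrix.of fun i j => b j i) = 1 := by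
  ext j k
  rw [Matrix.one_apply, ← orthonormal_iff_ite.mp hb j k, PiLp.inner_apply]
  simp [Matrix.mul_apply, mul_comm]

lemma exists_orthonormal_columns (W : Submodule 𝕜 (ι → 𝕜)) :
    ∃ (d : ℕ) (T : Matrix ι (Fin d) 𝕜), Tᴴ * T = 1 ∧ LinearMap.range T.mulVecLin = W := by
  let e := WithLp.linearEquiv 2 𝕜 (ι → 𝕜)
  let W' := W.comap e.toLinearMap
  let b := stdOrthonormalBasis 𝕜 W'
  refine ⟨_, Matrix.of fun i j => (b j : EuclideanSpace 𝕜 ι) i,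
    conjTranspose_mul_self_of_orthonormal (b.orthonormal.comp_linearIsometry W'.subtypeₗᵢ), ?_⟩
  calc LinearMap.range (Matrix.mulVecLin _)
      = Submodule.span 𝕜 ((e.toLinearMap ∘ₗ W'.subtype) '' Set.range b) := by
        rw [Matrix.range_mulVecLin, ← Set.range_comp]
        rfl
    _ = W'.map e.toLinearMap := by
        rw [Submodule.span_image, ← b.coe_toBasis, b.toBasis.span_eq, Submodule.map_comp,
          Submodule.map_top, Submodule.range_subtype]
    _ = W := Submodule.map_comap_eq_of_surjective e.surjective W

end OrthonormalColumns

section ScalarGram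

lemma eq_of_mul_eq_smul_one {R ι κ : Type*} [CommRing R] [IsDomain R] [Fintype ι] [DecidableEq ι]
    [Fintype κ] [DecidableEq κ] {U : Matrix ι κ R} {V : Matrix κ ι R} {c d : R} (hU : U ≠ 0)
    (hc : U * V = c • (1 : Matrix ι ι R)) (hd : V * U = d • (1 : Matrix κ κ R)) : c = d := by
  have h : c • U = d • U := by
    calc c • U = U * V * U := by rw [hc, Matrix.smul_mul, Matrix.one_mul]
      _ = d • U := by rw [Matrix.mul_assoc, hd, Matrix.mul_smul, Matrix.mul_one]
  exact smul_left_injective R hU h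

variable {ι κ : Type*} [Fintype ι] [DecidableEq κ]

open ComplexOrder in
lemma pos_of_conjTranspose_mul_self_eq_smul_one {U : Matrix ι κ ℂ} {d : ℂ} (hU : U ≠ 0)
    (hd : Uᴴ * U = d • (1 : Matrix κ κ ℂ)) : 0 < d := by
  obtain ⟨j, hj⟩ : ∃ j, U.col j ≠ 0 := by
    contrapose! hU
    exact Matrix.ext_col hU
  have hjd : star (U.col j) ⬝ᵥ U.col j = d := by
    simpa [Matrix.mul_apply, dotProduct] using congr($hd j j)
  exact hjd ▸ dotProduct_star_self_pos_iff.mpr hj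

open ComplexOrder in
lemma exists_smul_unitary [DecidableEq ι] [Fintype κ] {U : Matrix ι κ ℂ} {c d : ℂ} (hU : U ≠ 0)
    (hc : U * Uᴴ = c • (1 : Matrix ι ι ℂ)) (hd : Uᴴ * U = d • (1 : Matrix κ κ ℂ)) :
    ∃ s : ℂ, (s • U) * (s • U)ᴴ = 1 ∧ (s • U)ᴴ * (s • U) = 1 := by
  obtain rfl := eq_of_mul_eq_smul_one hU hc hd
  have hc_pos := pos_of_conjTranspose_mul_self_eq_smul_one hU hd
  obtain ⟨s, hs⟩ := CStarAlgebra.nonneg_iff_eq_star_mul_self.mp (inv_nonneg.mpr hc_pos.le)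
  have hsc : s * star s * c = 1 := by
    rw [mul_comm s, ← hs, inv_mul_cancel₀ hc_pos.ne']
  refine ⟨s, ?_, ?_⟩
  · rw [Matrix.conjTranspose_smul, Matrix.smul_mul, Matrix.mul_smul, hc, smul_smul, smul_smul, hsc,
      one_smul]
  · rw [Matrix.conjTranspose_smul, Matrix.mul_smul, Matrix.smul_mul, hd, smul_smul, smul_smul,
      hsc, one_smul]

end ScalarGram

section Intertwiners

variable {M ι κ : Type*} [Monoid M] [Fintype ι] [DecidableEq ι] [Fintype κ] [DecidableEq κ]

/-- `RepInvariant` for representations on `ι → ℂ`, with an arbitrary finite index type `ι` in place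
of `Fin n`. -/
def IsInvariantSubmodule (ρ : M →* Matrix.unitaryGroup ι ℂ) (W : Submodule ℂ (ι → ℂ)) : Prop :=
  ∀ g, ∀ v ∈ W, (ρ g).val *ᵥ v ∈ W

/-- The space `Hom(σ, ρ)` of intertwining operators from `σ` to `ρ`, as matrices. -/
def intertwiners (σ : M →* Matrix.unitaryGroup κ ℂ) (ρ : M →* Matrix.unitaryGroup ι ℂ) :
    Submodule ℂ (Matrix ι κ ℂ) where
  carrier := {T | ∀ g, (ρ g).val * T = T * (σ g).val}
  zero_mem' g := by rw [Matrix.mul_zero, Matrix.zero_mul]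
  add_mem' hS hT g := by rw [Matrix.mul_add, Matrix.add_mul, hS g, hT g]
  smul_mem' c T hT g := by rw [Matrix.mul_smul, Matrix.smul_mul, hT g]

/-- The commutant of `ρ` consists of scalars only. -/
def HasScalarCommutant (ρ : M →* Matrix.unitaryGroup ι ℂ) : Prop :=
  ∀ C ∈ intertwiners ρ ρ, ∃ c : ℂ, C = c • (1 : Matrix ι ι ℂ)

variable {ρ : M →* Matrix.unitaryGroup ι ℂ} {σ : M →* Matrix.unitaryGroup κ ℂ}

lemma mul_mem_intertwiners {μ : Type*} [Fintype μ] [DecidableEq μ]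
    {π : M →* Matrix.unitaryGroup μ ℂ} {S : Matrix μ ι ℂ} {T : Matrix ι κ ℂ}
    (hS : S ∈ intertwiners ρ π) (hT : T ∈ intertwiners σ ρ) :
    S * T ∈ intertwiners σ π := fun g => by
  rw [← Matrix.mul_assoc, hS g, Matrix.mul_assoc, hT g, Matrix.mul_assoc]

lemma conjTranspose_mem_intertwiners {T : Matrix ι κ ℂ} (hT : T ∈ intertwiners σ ρ) :
    Tᴴ ∈ intertwiners ρ σ := fun g => by
  have hσ : (σ g).val * (σ g).valᴴ = 1 := (σ g).2.2
  have hρ : (ρ g).valᴴ * (ρ g).val = 1 := (ρ g).2.1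
  have h : (ρ g).valᴴ * T = T * (σ g).valᴴ := by
    calc (ρ g).valᴴ * T = (ρ g).valᴴ * (T * (σ g).val) * (σ g).valᴴ := by
          rw [Matrix.mul_assoc, Matrix.mul_assoc, hσ, Matrix.mul_one]
      _ = T * (σ g).valᴴ := by
          rw [← hT g, ← Matrix.mul_assoc, hρ, Matrix.one_mul]
  simpa using congr(($h)ᴴ).symm

lemma IsInvariantSubmodule.map_mulVecLin {W : Submodule ℂ (κ → ℂ)} (hW : IsInvariantSubmodule σ W)
    {T : Matrix ι κ ℂ} (hT : T ∈ intertwiners σ ρ) :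
    IsInvariantSubmodule ρ (W.map T.mulVecLin) := by
  rintro g _ ⟨w, hw, rfl⟩
  refine ⟨(σ g).val *ᵥ w, hW g w hw, ?_⟩
  simp only [Matrix.mulVecLin_apply, Matrix.mulVec_mulVec, hT g]

lemma exists_minimal_invariantSubmodule {W : Submodule ℂ (ι → ℂ)} (hW : IsInvariantSubmodule ρ W)
    (hW0 : W ≠ ⊥) : ∃ V ≤ W, V ≠ ⊥ ∧ IsInvariantSubmodule ρ V ∧
      ∀ V' ≤ V, IsInvariantSubmodule ρ V' → V' = ⊥ ∨ V' = V := by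
  obtain ⟨V, hVW, ⟨hV, hV0⟩, hmin⟩ := exists_minimal_le_of_wellFoundedLT
    (fun V => IsInvariantSubmodule ρ V ∧ V ≠ ⊥) W ⟨hW, hW0⟩
  exact ⟨V, hVW, hV0, hV, fun V' hV'V hV' =>
    or_iff_not_imp_left.mpr fun hV'0 => hV'V.antisymm (hmin ⟨hV', hV'0⟩ hV'V)⟩

lemma exists_rep_of_invariant_range {T : Matrix ι κ ℂ} (hT : Tᴴ * T = 1)
    (hρ : IsInvariantSubmodule ρ (LinearMap.range T.mulVecLin)) :
    ∃ σ : M →* Matrix.unitaryGroup κ ℂ, T ∈ intertwiners σ ρ := by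
  have compress (g : M) : T * (Tᴴ * (ρ g).val * T) = (ρ g).val * T := by
    refine Matrix.mulVec_injective (funext fun v => ?_)
    obtain ⟨w, hw⟩ := hρ g _ ⟨v, rfl⟩
    simp only [Matrix.mulVecLin_apply, Matrix.mulVec_mulVec] at hw
    rw [Matrix.mul_assoc, ← Matrix.mulVec_mulVec, ← Matrix.mulVec_mulVec, ← hw,
      Matrix.mulVec_mulVec w, hT, Matrix.one_mulVec]
  have unitary (g : M) : Tᴴ * (ρ g).val * T ∈ Matrix.unitaryGroup κ ℂ := by
    have hg : (ρ g).valᴴ * (ρ g).val = 1 := (ρ g).2.1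
    rw [Matrix.mem_unitaryGroup_iff', Matrix.star_eq_conjTranspose]
    calc (Tᴴ * (ρ g).val * T)ᴴ * (Tᴴ * (ρ g).val * T)
        = Tᴴ * (ρ g).valᴴ * (T * (Tᴴ * (ρ g).val * T)) := by
          simp only [Matrix.conjTranspose_mul, Matrix.conjTranspose_conjTranspose, Matrix.mul_assoc]
      _ = Tᴴ * ((ρ g).valᴴ * (ρ g).val) * T := by rw [compress]; simp only [Matrix.mul_assoc]
      _ = 1 := by rw [hg, Matrix.mul_one, hT]
  refine ⟨⟨⟨fun g => ⟨_, unitary g⟩, Subtype.ext ?_⟩, fun g h => Subtype.ext ?_⟩,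
    fun g => (compress g).symm⟩
  · simpa using hT
  · change Tᴴ * (ρ (g * h)).val * T = Tᴴ * (ρ g).val * T * (Tᴴ * (ρ h).val * T)
    rw [Matrix.mul_assoc _ T, compress, map_mul, Submonoid.coe_mul]
    simp only [Matrix.mul_assoc]

lemma exists_unitary_mem_intertwiners (hρ : HasScalarCommutant ρ) (hσ : HasScalarCommutant σ)
    {U : Matrix ι κ ℂ} (hU : U ∈ intertwiners σ ρ) (hU0 : U ≠ 0) :
    ∃ V ∈ intertwiners σ ρ, V * Vᴴ = 1 ∧ Vᴴ * V = 1 := by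
  have hU' := conjTranspose_mem_intertwiners hU
  obtain ⟨c, hc⟩ := hρ _ (mul_mem_intertwiners hU hU')
  obtain ⟨d, hd⟩ := hσ _ (mul_mem_intertwiners hU' hU)
  obtain ⟨s, hs⟩ := exists_smul_unitary hU0 hc hd
  exact ⟨s • U, Submodule.smul_mem _ s hU, hs⟩

end Intertwiners

section Irreducible

variable {G : Type*} [Group G] {n : ℕ}

lemma RepIrreducible.hasScalarCommutant {σ : G →* Matrix.unitaryGroup (Fin n) ℂ}
    (hσ : RepIrreducible σ) : HasScalarCommutant σ := by
  intro C hC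
  have : Nonempty (Fin n) := ⟨⟨0, hσ.1⟩⟩
  obtain ⟨μ, hμ⟩ := Module.End.exists_eigenvalue C.mulVecLin
  have hinv : RepInvariant σ (Module.End.eigenspace C.mulVecLin μ) := by
    intro g v hv
    rw [Module.End.mem_eigenspace_iff, Matrix.mulVecLin_apply] at hv ⊢
    rw [Matrix.mulVec_mulVec, ← hC, ← Matrix.mulVec_mulVec, hv, Matrix.mulVec_smul]
  have htop := (hσ.2 _ hinv).resolve_left hμ
  refine ⟨μ, Matrix.mulVec_injective (funext fun v => ?_)⟩
  have hv : v ∈ Module.End.eigenspace C.mulVecLin μ := htop ▸ Submodule.mem_top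
  rw [Module.End.mem_eigenspace_iff, Matrix.mulVecLin_apply] at hv
  rw [hv, Matrix.smul_mulVec, Matrix.one_mulVec]

variable {ι : Type*} [Fintype ι] [DecidableEq ι] {ρ : G →* Matrix.unitaryGroup ι ℂ}

lemma repIrreducible_of_minimal_range {σ : G →* Matrix.unitaryGroup (Fin n) ℂ}
    {T : Matrix ι (Fin n) ℂ} (hT : T ∈ intertwiners σ ρ) (hinj : Function.Injective T.mulVecLin)
    (hT0 : T ≠ 0)
    (hmin : ∀ V ≤ LinearMap.range T.mulVecLin, IsInvariantSubmodule ρ V →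
      V = ⊥ ∨ V = LinearMap.range T.mulVecLin) : RepIrreducible σ := by
  refine ⟨Nat.one_le_iff_ne_zero.mpr ?_, fun W hW => ?_⟩
  · rintro rfl
    exact hT0 (Subsingleton.elim T 0)
  · have hWT := IsInvariantSubmodule.map_mulVecLin hW hT
    refine (hmin _ LinearMap.map_le_range hWT).imp (fun h => ?_) (fun h => ?_)
    · exact Submodule.map_injective_of_injective hinj (h.trans (Submodule.map_bot _).symm)
    · exact Submodule.map_injective_of_injective hinj (h.trans (Submodule.map_top _).symm)

lemma exists_irreducible_constituent {W : Submodule ℂ (ι → ℂ)} (hW : IsInvariantSubmodule ρ W)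
    (hW0 : W ≠ ⊥) : ∃ (p : ℕ) (σ : G →* Matrix.unitaryGroup (Fin p) ℂ), RepIrreducible σ ∧
      ∃ T ∈ intertwiners σ ρ, T ≠ 0 ∧ ∀ j, T.col j ∈ W := by
  obtain ⟨V, hVW, hV0, hV, hmin⟩ := exists_minimal_invariantSubmodule hW hW0
  obtain ⟨d, T, hTT, rfl⟩ := exists_orthonormal_columns V
  obtain ⟨σ, hT⟩ := exists_rep_of_invariant_range hTT hV
  have hinj : Function.Injective T.mulVecLin := fun v w h => by
    simpa [Matrix.mulVec_mulVec, hTT] using congr(Tᴴ *ᵥ $h)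
  have hT0 : T ≠ 0 := fun h => hV0 (by rw [h, Matrix.mulVecLin_zero, LinearMap.range_zero])
  refine ⟨d, σ, repIrreducible_of_minimal_range hT hinj hT0 hmin, T, hT, hT0, fun j => hVW ?_⟩
  rw [Matrix.range_mulVecLin]
  exact Submodule.subset_span ⟨j, rfl⟩

end Irreducible

section TensorProducts

variable {M N ι κ : Type*} [Monoid M] [Monoid N] [Fintype ι] [DecidableEq ι] [Fintype κ]
  [DecidableEq κ]

/-- The tensor product of two unitary representations of the same monoid, by Kronecker products. -/
def tensorRep (σ : M →* Matrix.unitaryGroup ι ℂ) (τ : M →* Matrix.unitaryGroup κ ℂ) :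
    M →* Matrix.unitaryGroup (ι × κ) ℂ where
  toFun g := ⟨(σ g).val ⊗ₖ (τ g).val, Matrix.kronecker_mem_unitary (σ g).2 (τ g).2⟩
  map_one' := Subtype.ext (by simp)
  map_mul' g h := Subtype.ext (by simp [Matrix.mul_kronecker_mul])

/-- The external tensor product with arbitrary finite index types; `extTensor σ τ` is its reindexing
along `finProdFinEquiv`. -/
def prodTensorRep (σ : M →* Matrix.unitaryGroup ι ℂ) (τ : N →* Matrix.unitaryGroup κ ℂ) :
    M × N →* Matrix.unitaryGroup (ι × κ) ℂ :=
  tensorRep (σ.comp (MonoidHom.fst M N)) (τ.comp (MonoidHom.snd M N))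

variable {σ : M →* Matrix.unitaryGroup ι ℂ} {τ : N →* Matrix.unitaryGroup κ ℂ}

lemma prodTensorRep_apply (x : M × N) :
    (prodTensorRep σ τ x).val = (σ x.1).val ⊗ₖ (τ x.2).val := rfl

lemma exists_eq_one_kronecker_of_commute (hσ : HasScalarCommutant σ)
    {C : Matrix (ι × κ) (ι × κ) ℂ}
    (hC : ∀ g, ((σ g).val ⊗ₖ (1 : Matrix κ κ ℂ)) * C = C * ((σ g).val ⊗ₖ (1 : Matrix κ κ ℂ))) :
    ∃ D : Matrix κ κ ℂ, C = (1 : Matrix ι ι ℂ) ⊗ₖ D := by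
  have hblock (j l : κ) : C.submatrix (·, j) (·, l) ∈ intertwiners σ σ := fun g => by
    ext i k
    simpa [Matrix.mul_apply, Fintype.sum_prod_type, Matrix.one_apply]
      using congr($(hC g) (i, j) (k, l))
  choose D hD using fun j l => hσ _ (hblock j l)
  refine ⟨Matrix.of D, ?_⟩
  ext ⟨i, j⟩ ⟨k, l⟩
  simpa [mul_comm] using congr($(hD j l) i k)

lemma HasScalarCommutant.prodTensorRep (hσ : HasScalarCommutant σ) (hτ : HasScalarCommutant τ) :
    HasScalarCommutant (prodTensorRep σ τ) := by
  intro C hC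
  obtain ⟨D, rfl⟩ := exists_eq_one_kronecker_of_commute hσ fun g => by
    simpa [prodTensorRep_apply] using hC (g, 1)
  rcases isEmpty_or_nonempty ι with hι | ⟨⟨i⟩⟩
  · exact ⟨0, Subsingleton.elim _ _⟩
  have hD : D ∈ intertwiners τ τ := fun h => by
    have h1 := hC (1, h)
    simp only [prodTensorRep_apply, map_one, OneMemClass.coe_one, ← Matrix.mul_kronecker_mul,
      Matrix.one_mul] at h1
    ext j l
    simpa using congr($h1 (i, j) (i, l))
  obtain ⟨d, rfl⟩ := hτ D hD
  exact ⟨d, by rw [Matrix.kronecker_smul, Matrix.one_kronecker_one]⟩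

end TensorProducts

section Evaluation

/-- The matrix of the evaluation map `u ⊗ e_l ↦ X l u` of a family `X` of matrices, where `e_l` is
the standard basis of the space indexed by `κ`. -/
def evalMatrix {R ι μ κ : Type*} (X : κ → Matrix ι μ R) : Matrix ι (μ × κ) R :=
  Matrix.of fun a x => X x.2 a x.1

section Semiring

variable {R ι μ κ : Type*}

lemma evalMatrix_eq_zero [Zero R] {X : κ → Matrix ι μ R} : evalMatrix X = 0 ↔ X = 0 :=
  ⟨fun h => by ext l a i; exact congr($h a (i, l)), fun h => by rw [h]; rfl⟩

lemma mul_evalMatrix {α : Type*} [NonUnitalNonAssocSemiring R] [Fintype ι] (A : Matrix α ι R)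
    (X : κ → Matrix ι μ R) :
    A * evalMatrix X = evalMatrix fun l => A * X l := rfl

lemma evalMatrix_mul_kronecker {μ' κ' : Type*} [CommSemiring R] [Fintype μ] [Fintype κ]
    (X : κ → Matrix ι μ R) (B : Matrix μ μ' R) (C : Matrix κ κ' R) :
    evalMatrix X * (B ⊗ₖ C) = evalMatrix fun l => (∑ j, C j l • X j) * B := by
  ext a ⟨k, l⟩
  simp only [evalMatrix, Matrix.mul_apply, Matrix.of_apply, Fintype.sum_prod_type,
    Matrix.kroneckerMap_apply, Matrix.sum_apply, Matrix.smul_apply, smul_eq_mul, Finset.sum_mul]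
  exact Finset.sum_congr rfl fun _ _ => Finset.sum_congr rfl fun _ _ => by ring

/-- `Matrix.vec` as a linear map. -/
def vecLinearMap [Semiring R] : Matrix ι μ R →ₗ[R] μ × ι → R where
  toFun := Matrix.vec
  map_add' := Matrix.vec_add
  map_smul' := Matrix.vec_smul

end Semiring

variable {M N ι μ κ : Type*} [Monoid M] [Monoid N] [Fintype ι] [DecidableEq ι] [Fintype μ]
  [DecidableEq μ] [Fintype κ] [DecidableEq κ] {ρ : M × N →* Matrix.unitaryGroup ι ℂ}
  {σ : M →* Matrix.unitaryGroup μ ℂ}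

lemma evalMatrix_mem_intertwiners {τ : N →* Matrix.unitaryGroup κ ℂ} {X : κ → Matrix ι μ ℂ}
    (hσ : ∀ l, X l ∈ intertwiners σ (ρ.comp (MonoidHom.inl M N)))
    (hτ : ∀ h l, (ρ (1, h)).val * X l = ∑ j, (τ h).val j l • X j) :
    evalMatrix X ∈ intertwiners (prodTensorRep σ τ) ρ := by
  rintro ⟨g, h⟩
  have hgh : (ρ (g, h)).val = (ρ (1, h)).val * (ρ (g, 1)).val := by
    rw [← Submonoid.coe_mul, ← map_mul, Prod.mk_mul_mk, one_mul, mul_one]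
  have hg (l) : (ρ (g, 1)).val * X l = X l * (σ g).val := hσ l g
  simp only [hgh, prodTensorRep_apply, mul_evalMatrix, evalMatrix_mul_kronecker, Matrix.mul_assoc,
    hg, ← hτ]

/-- `N` acts on `Hom(σ, ρ|M)` because it commutes with `M`; the action `X ↦ ρ (1, h) * X` becomes a
tensor product with a trivial representation after vectorization. -/
lemma isInvariantSubmodule_map_vec_intertwiners :
    IsInvariantSubmodule (tensorRep (1 : N →* Matrix.unitaryGroup μ ℂ)
        (ρ.comp (MonoidHom.inr M N)))
      ((intertwiners σ (ρ.comp (MonoidHom.inl M N))).map vecLinearMap) := by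
  rintro h _ ⟨X, hX, rfl⟩
  refine ⟨(ρ (1, h)).val * X, fun g => ?_, Matrix.vec_mul_eq_mulVec _ X⟩
  have hcomm : (ρ (g, 1)).val * (ρ (1, h)).val = (ρ (1, h)).val * (ρ (g, 1)).val := by
    simp only [← Submonoid.coe_mul, ← map_mul, Prod.mk_mul_mk, one_mul, mul_one]
  calc (ρ (g, 1)).val * ((ρ (1, h)).val * X) = (ρ (1, h)).val * ((ρ (g, 1)).val * X) := by
        rw [← Matrix.mul_assoc, hcomm, Matrix.mul_assoc]
    _ = (ρ (1, h)).val * X * (σ g).val := by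
        rw [Matrix.mul_assoc]
        exact congr(_ * $(hX g))

end Evaluation

section ProductGroups

variable {G H : Type*} [Group G] [Group H]

lemma exists_irreducible_right_factor {ι μ : Type*} [Fintype ι] [DecidableEq ι] [Fintype μ]
    [DecidableEq μ] {ρ : G × H →* Matrix.unitaryGroup ι ℂ} {σ : G →* Matrix.unitaryGroup μ ℂ}
    {T : Matrix ι μ ℂ} (hT : T ∈ intertwiners σ (ρ.comp (MonoidHom.inl G H))) (hT0 : T ≠ 0) :
    ∃ (q : ℕ) (τ : H →* Matrix.unitaryGroup (Fin q) ℂ), RepIrreducible τ ∧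
      ∃ U ∈ intertwiners (prodTensorRep σ τ) ρ, U ≠ 0 := by
  have hHom : (intertwiners σ (ρ.comp (MonoidHom.inl G H))).map vecLinearMap ≠ ⊥ := fun h =>
    hT0 (Matrix.vec_eq_zero_iff.mp ((Submodule.eq_bot_iff _).mp h _ ⟨T, hT, rfl⟩))
  obtain ⟨q, τ, hτ, Z, hZ, hZ0, hcol⟩ :=
    exists_irreducible_constituent isInvariantSubmodule_map_vec_intertwiners hHom
  choose X hX hXZ using hcol
  refine ⟨q, τ, hτ, evalMatrix X, evalMatrix_mem_intertwiners hX fun h l => ?_, fun h => hZ0 ?_⟩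
  · apply Matrix.vec_inj.mp
    calc Matrix.vec ((ρ (1, h)).val * X l)
        = (((1 : Matrix μ μ ℂ) ⊗ₖ (ρ (1, h)).val) * Z).col l := by
          rw [Matrix.vec_mul_eq_mulVec]
          exact congr(_ *ᵥ $(hXZ l))
      _ = (Z * (τ h).val).col l := by rw [← hZ h]; rfl
      _ = ∑ j, (τ h).val j l • Z.col j := by
          ext x
          simp [Matrix.mul_apply, mul_comm]
      _ = Matrix.vec (∑ j, (τ h).val j l • X j) := by
          simp only [Matrix.vec_sum, Matrix.vec_smul, ← hXZ]
          rfl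
  · refine Matrix.ext_col fun j => ?_
    rw [← hXZ, evalMatrix_eq_zero.mp h]
    exact map_zero vecLinearMap

lemma unitarilyEquivalent_extTensor {n p q : ℕ} {ρ : G × H →* Matrix.unitaryGroup (Fin n) ℂ}
    {σ : G →* Matrix.unitaryGroup (Fin p) ℂ} {τ : H →* Matrix.unitaryGroup (Fin q) ℂ}
    {V : Matrix (Fin n) (Fin p × Fin q) ℂ} (hV : V ∈ intertwiners (prodTensorRep σ τ) ρ)
    (hVV : V * Vᴴ = 1) (hVV' : Vᴴ * V = 1) :
    ∃ hpq : p * q = n, UnitarilyEquivalent ρ (transportRep hpq (extTensor σ τ)) := by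
  obtain rfl : p * q = n := by
    simpa using Matrix.square_of_invertible (R := ℂ) Vᴴ V hVV' hVV
  let A : Matrix (Fin (p * q)) (Fin (p * q)) ℂ := Vᴴ.submatrix finProdFinEquiv.symm id
  have hA : star A = V.submatrix id finProdFinEquiv.symm := by
    rw [Matrix.star_eq_conjTranspose, Matrix.conjTranspose_submatrix,
      Matrix.conjTranspose_conjTranspose]
  have hA_mul (B : Matrix (Fin (p * q)) (Fin (p * q)) ℂ) :
      A * B * star A = (Vᴴ * B * V).submatrix finProdFinEquiv.symm finProdFinEquiv.symm := by
    rw [hA]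
    rfl
  have hA_unitary : A ∈ Matrix.unitaryGroup (Fin (p * q)) ℂ := by
    rw [Matrix.mem_unitaryGroup_iff]
    simpa [hVV'] using hA_mul 1
  refine ⟨rfl, ⟨A, hA_unitary⟩, fun x => Subtype.ext ?_⟩
  calc (extTensor σ τ x).val
      = ((σ x.1).val ⊗ₖ (τ x.2).val).submatrix finProdFinEquiv.symm finProdFinEquiv.symm := rfl
    _ = A * (ρ x).val * star A := by
        rw [hA_mul, Matrix.mul_assoc, hV x, ← Matrix.mul_assoc, hVV', Matrix.one_mul,
          prodTensorRep_apply]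

end ProductGroups

/-- Every irreducible unitary representation of a product group `G × H`
is unitarily equivalent to an external tensor product of irreducible unitary
representations of `G` and `H`. -/
theorem irreducible_of_product_eq_extTensor {G H : Type*} [Group G] [Group H] {n : ℕ}
    (hn : 1 ≤ n) (ρ : (G × H) →* Matrix.unitaryGroup (Fin n) ℂ)
    (hρ : RepIrreducible ρ) :
    ∃ (p q : ℕ) (_ : 1 ≤ p) (_ : 1 ≤ q) (hpq : p * q = n)
      (σ : G →* Matrix.unitaryGroup (Fin p) ℂ) (τ : H →* Matrix.unitaryGroup (Fin q) ℂ),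
      RepIrreducible σ ∧ RepIrreducible τ ∧
      UnitarilyEquivalent ρ (transportRep hpq (extTensor σ τ)) := by
  have hn_top : (⊤ : Submodule ℂ (Fin n → ℂ)) ≠ ⊥ := by
    have : Nonempty (Fin n) := ⟨⟨0, hn⟩⟩
    exact top_ne_bot
  obtain ⟨p, σ, hσ, T, hT, hT0, -⟩ := exists_irreducible_constituent
    (ρ := ρ.comp (MonoidHom.inl G H)) (fun _ _ _ => Submodule.mem_top) hn_top
  obtain ⟨q, τ, hτ, U, hU, hU0⟩ := exists_irreducible_right_factor hT hT0
  obtain ⟨V, hV, hVV, hVV'⟩ := exists_unitary_mem_intertwiners hρ.hasScalarCommutant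
    (hσ.hasScalarCommutant.prodTensorRep hτ.hasScalarCommutant) hU hU0
  obtain ⟨hpq, hequiv⟩ := unitarilyEquivalent_extTensor hV hVV hVV'
  exact ⟨p, q, hσ.1, hτ.1, hpq, σ, τ, hσ, hτ, hequiv⟩
end

section
/- Let G and H be groups, and let ρ : G →* Matrix.unitaryGroup (Fin p) ℂ, σ : H →* Matrix.unitaryGroup (Fin q) ℂ, ρ' : G →* Matrix.unitaryGroup (Fin p') ℂ, σ' : H →* Matrix.unitaryGroup (Fin q') ℂ all be irreducible unitary representations with p * q = p' * q'. If the external tensor products ρ ⊠ σ and ρ' ⊠ σ' are unitarily equivalent as representations of G × H (after transporting along Fin (p*q) ≃ Fin (p'*q')), then p = p', q = q', ρ is unitarily equivalent to ρ', and σ is unitarily equivalent to σ'. -/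
/-!
A matrix `T` intertwining `ρ ⊠ σ` with `ρ' ⊠ σ'` is cut into blocks by fixing the second coordinates
of its row and column indices. Restricting to `G × {1}` shows that every such block intertwines `ρ`
with `ρ'`, and symmetrically fixing the first coordinates gives intertwiners of `σ` with `σ'`. A
nonzero entry of `T` lies in one block of each kind. By Schur's lemma a nonzero intertwiner `B` of
irreducible unitary representations is bijective, and `Bᴴ * B`, which commutes with the source
representation, is a positive scalar, so that a rescaling of `B` is a unitary equivalence.
-/

open Matrix Kronecker

section Kronecker

variable {l m n o R : Type*} [Fintype m] [Fintype n] [NonAssocSemiring R]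

lemma submatrix_kronecker_one_mul [DecidableEq n] (A : Matrix m m R) (T : Matrix (m × n) l R)
    (f : o → l) (j : n) :
    ((A ⊗ₖ (1 : Matrix n n R)) * T).submatrix (·, j) f = A * T.submatrix (·, j) f := by
  ext
  simp [Matrix.mul_apply, Fintype.sum_prod_type, Matrix.one_apply]

lemma submatrix_mul_kronecker_one [DecidableEq n] (A : Matrix m m R) (T : Matrix l (m × n) R)
    (f : o → l) (j : n) :
    (T * (A ⊗ₖ (1 : Matrix n n R))).submatrix f (·, j) = T.submatrix f (·, j) * A := by
  ext
  simp [Matrix.mul_apply, Fintype.sum_prod_type, Matrix.one_apply]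

lemma submatrix_one_kronecker_mul [DecidableEq m] (B : Matrix n n R) (T : Matrix (m × n) l R)
    (f : o → l) (i : m) :
    (((1 : Matrix m m R) ⊗ₖ B) * T).submatrix (i, ·) f = B * T.submatrix (i, ·) f := by
  ext
  simp [Matrix.mul_apply, Fintype.sum_prod_type_right, Matrix.one_apply]

lemma submatrix_mul_one_kronecker [DecidableEq m] (B : Matrix n n R) (T : Matrix l (m × n) R)
    (f : o → l) (i : m) :
    (T * ((1 : Matrix m m R) ⊗ₖ B)).submatrix f (i, ·) = T.submatrix f (i, ·) * B := by
  ext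
  simp [Matrix.mul_apply, Fintype.sum_prod_type_right, Matrix.one_apply]

end Kronecker

open scoped ComplexOrder in
lemma exists_smul_mem_unitaryGroup_of_conjTranspose_mul_self {𝕜 n : Type*} [RCLike 𝕜]
    [Fintype n] [DecidableEq n] {T : Matrix n n 𝕜} (hT : T ≠ 0) {c : 𝕜} (hc : Tᴴ * T = c • 1) :
    ∃ r : 𝕜, r • T ∈ Matrix.unitaryGroup n 𝕜 := by
  obtain ⟨i, -⟩ := Function.ne_iff.1 hT
  have c_nonneg : 0 ≤ c := by
    simpa [hc] using (Matrix.posSemidef_conjTranspose_mul_self T).diag_nonneg (i := i)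
  have c_ne_zero : c ≠ 0 := by
    rintro rfl
    exact hT (Matrix.conjTranspose_mul_self_eq_zero.1 (by rw [hc, zero_smul]))
  have norm_c : (‖c‖ : 𝕜) = c := RCLike.norm_of_nonneg' c_nonneg
  have sqrt_mul_sqrt : ((√‖c‖ : ℝ) : 𝕜) * (√‖c‖ : ℝ) = c := by
    rw [← RCLike.ofReal_mul, Real.mul_self_sqrt (norm_nonneg c), norm_c]
  refine ⟨((√‖c‖ : ℝ) : 𝕜)⁻¹, Matrix.mem_unitaryGroup_iff'.2 ?_⟩
  calc star (((√‖c‖ : ℝ) : 𝕜)⁻¹ • T) * (((√‖c‖ : ℝ) : 𝕜)⁻¹ • T)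
      = (((√‖c‖ : ℝ) : 𝕜) * (√‖c‖ : ℝ))⁻¹ • (Tᴴ * T) := by
        simp [star_smul, Matrix.star_eq_conjTranspose, smul_smul]
    _ = 1 := by rw [sqrt_mul_sqrt, hc, smul_smul, inv_mul_cancel₀ c_ne_zero, one_smul]

section Intertwiner

variable {G ι κ R : Type*} [Fintype ι] [DecidableEq ι] [Fintype κ] [DecidableEq κ]
  [CommRing R] [StarRing R]

/-- The representation on column vectors given by a unitary matrix representation, through which
Mathlib's theory of irreducible representations applies. -/
def matrixRepresentation [Monoid G] (ρ : G →* Matrix.unitaryGroup ι R) :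
    Representation R G (ι → R) :=
  ((Matrix.toLinAlgEquiv' : Matrix ι ι R ≃ₐ[R] _) : Matrix ι ι R →* _).comp
    ((Matrix.unitaryGroup ι R).subtype.comp ρ)

lemma matrixRepresentation_apply [Monoid G] (ρ : G →* Matrix.unitaryGroup ι R) (g : G)
    (v : ι → R) : matrixRepresentation ρ g v = (ρ g).val *ᵥ v := rfl

/-- The matrix `T` intertwines the unitary matrix representations `ρ` and `ρ'`, i.e. `v ↦ T *ᵥ v`
is an equivariant map from the space of `ρ` to that of `ρ'`. -/
def IsIntertwiner [Monoid G] (ρ : G →* Matrix.unitaryGroup ι R)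
    (ρ' : G →* Matrix.unitaryGroup κ R) (T : Matrix κ ι R) : Prop :=
  ∀ g, (ρ' g).val * T = T * (ρ g).val

namespace IsIntertwiner

/-- The bundled map between the associated representations on column vectors. -/
def toIntertwiningMap [Monoid G] {ρ : G →* Matrix.unitaryGroup ι R}
    {ρ' : G →* Matrix.unitaryGroup κ R} {T : Matrix κ ι R} (hT : IsIntertwiner ρ ρ' T) :
    (matrixRepresentation ρ).IntertwiningMap (matrixRepresentation ρ') :=
  LinearMap.intertwiningMap_of_isIntertwiningMap _ _ T.mulVecLin fun g v => by
    simp only [matrixRepresentation_apply, Matrix.mulVecLin_apply, Matrix.mulVec_mulVec, hT g]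

lemma mul [Monoid G] {μ : Type*} [Fintype μ] [DecidableEq μ] {ρ : G →* Matrix.unitaryGroup ι R}
    {ρ' : G →* Matrix.unitaryGroup κ R} {ρ'' : G →* Matrix.unitaryGroup μ R}
    {S : Matrix μ κ R} {T : Matrix κ ι R} (hS : IsIntertwiner ρ' ρ'' S)
    (hT : IsIntertwiner ρ ρ' T) : IsIntertwiner ρ ρ'' (S * T) := fun g => by
  rw [← Matrix.mul_assoc, hS g, Matrix.mul_assoc, hT g, Matrix.mul_assoc]

lemma smul [Monoid G] {ρ : G →* Matrix.unitaryGroup ι R} {ρ' : G →* Matrix.unitaryGroup κ R}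
    {T : Matrix κ ι R} (hT : IsIntertwiner ρ ρ' T) (r : R) : IsIntertwiner ρ ρ' (r • T) :=
  fun g => by rw [Matrix.mul_smul, hT g, Matrix.smul_mul]

lemma conjTranspose [Group G] {ρ : G →* Matrix.unitaryGroup ι R}
    {ρ' : G →* Matrix.unitaryGroup κ R} {T : Matrix κ ι R} (hT : IsIntertwiner ρ ρ' T) :
    IsIntertwiner ρ' ρ Tᴴ := fun g => by
  have h := congrArg Matrix.conjTranspose (hT g⁻¹)
  simp only [Matrix.conjTranspose_mul, map_inv, Matrix.UnitaryGroup.inv_val,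
    Matrix.star_eq_conjTranspose, Matrix.conjTranspose_conjTranspose] at h
  exact h.symm

end IsIntertwiner

end Intertwiner

section Schur

variable {G : Type*} [Group G] {m n : ℕ} {ρ : G →* Matrix.unitaryGroup (Fin m) ℂ}
  {ρ' : G →* Matrix.unitaryGroup (Fin n) ℂ}

lemma RepIrreducible.isIrreducible (hρ : RepIrreducible ρ) :
    (matrixRepresentation ρ).IsIrreducible where
  exists_pair_ne := by
    have : NeZero m := ⟨Nat.one_le_iff_ne_zero.1 hρ.1⟩
    exact ⟨⊥, ⊤, fun h => bot_ne_top (congrArg Subrepresentation.toSubmodule h)⟩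
  eq_bot_or_eq_top W :=
    (hρ.2 W.toSubmodule W.apply_mem_toSubmodule).imp
      (fun h => Subrepresentation.toSubmodule_injective h)
      (fun h => Subrepresentation.toSubmodule_injective h)

namespace IsIntertwiner

lemma mulVec_bijective (hρ : RepIrreducible ρ) (hρ' : RepIrreducible ρ')
    {T : Matrix (Fin n) (Fin m) ℂ} (hT : IsIntertwiner ρ ρ' T) (hT0 : T ≠ 0) :
    Function.Bijective T.mulVec := by
  have := hρ.isIrreducible
  have := hρ'.isIrreducible
  refine (Representation.IsIrreducible.bijective_or_eq_zero hT.toIntertwiningMap).resolve_right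
    fun h => hT0 (Matrix.mulVec_injective (funext fun v => ?_))
  rw [Matrix.zero_mulVec]
  exact DFunLike.congr_fun h v

lemma dim_eq (hρ : RepIrreducible ρ) (hρ' : RepIrreducible ρ')
    {T : Matrix (Fin n) (Fin m) ℂ} (hT : IsIntertwiner ρ ρ' T) (hT0 : T ≠ 0) : m = n := by
  simpa using (LinearEquiv.ofBijective T.mulVecLin (hT.mulVec_bijective hρ hρ' hT0)).finrank_eq

lemma exists_eq_smul_one (hρ : RepIrreducible ρ) {T : Matrix (Fin m) (Fin m) ℂ}
    (hT : IsIntertwiner ρ ρ T) : ∃ c : ℂ, T = c • 1 := by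
  have := hρ.isIrreducible
  obtain ⟨c, hc⟩ :=
    Representation.IsIrreducible.algebraMap_intertwiningMap_bijective_of_isAlgClosed.2
      hT.toIntertwiningMap
  refine ⟨c, Matrix.mulVec_injective (funext fun v => ?_)⟩
  rw [Matrix.smul_mulVec, Matrix.one_mulVec]
  exact (DFunLike.congr_fun hc v).symm

lemma unitarilyEquivalent (hρ : RepIrreducible ρ) (hρ' : RepIrreducible ρ')
    {T : Matrix (Fin n) (Fin m) ℂ} (hT : IsIntertwiner ρ ρ' T) (hT0 : T ≠ 0) :
    ∃ h : m = n, UnitarilyEquivalent (transportRep h ρ) ρ' := by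
  obtain rfl := hT.dim_eq hρ hρ' hT0
  obtain ⟨c, hc⟩ := (hT.conjTranspose.mul hT).exists_eq_smul_one hρ
  obtain ⟨r, hr⟩ := exists_smul_mem_unitaryGroup_of_conjTranspose_mul_self hT0 hc
  exact ⟨rfl, ⟨r • T, hr⟩, fun g => eq_mul_inv_of_mul_eq (Subtype.ext (hT.smul r g))⟩

end IsIntertwiner

lemma UnitarilyEquivalent.exists_isIntertwiner_ne_zero (hn : n ≠ 0) (h : m = n)
    (heq : UnitarilyEquivalent (transportRep h ρ) ρ') : ∃ T ≠ 0, IsIntertwiner ρ ρ' T := by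
  subst h
  obtain ⟨A, hA⟩ := heq
  have : NeZero m := ⟨hn⟩
  exact ⟨A.val, (Unitary.isUnit_coe (U := A)).ne_zero,
    fun g => congrArg Subtype.val (eq_mul_inv_iff_mul_eq.1 (hA g))⟩

end Schur

section ExtTensor

variable {G H : Type*} [Group G] [Group H] {p q p' q' : ℕ}
  {ρ : G →* Matrix.unitaryGroup (Fin p) ℂ} {σ : H →* Matrix.unitaryGroup (Fin q) ℂ}
  {ρ' : G →* Matrix.unitaryGroup (Fin p') ℂ} {σ' : H →* Matrix.unitaryGroup (Fin q') ℂ}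
  {T : Matrix (Fin (p' * q')) (Fin (p * q)) ℂ}

namespace IsIntertwiner

lemma kronecker_mul_submatrix (hT : IsIntertwiner (extTensor ρ σ) (extTensor ρ' σ') T)
    (g : G) (k : H) :
    ((ρ' g).val ⊗ₖ (σ' k).val) * T.submatrix finProdFinEquiv finProdFinEquiv =
      T.submatrix finProdFinEquiv finProdFinEquiv * ((ρ g).val ⊗ₖ (σ k).val) := by
  have h : Matrix.reindex finProdFinEquiv finProdFinEquiv ((ρ' g).val ⊗ₖ (σ' k).val) * T =
      T * Matrix.reindex finProdFinEquiv finProdFinEquiv ((ρ g).val ⊗ₖ (σ k).val) := hT (g, k)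
  simpa [← Matrix.submatrix_mul_equiv _ _ _ finProdFinEquiv _] using
    congrArg (·.submatrix finProdFinEquiv finProdFinEquiv) h

lemma fst_block (hT : IsIntertwiner (extTensor ρ σ) (extTensor ρ' σ') T) (j' : Fin q')
    (j : Fin q) :
    IsIntertwiner ρ ρ'
      ((T.submatrix finProdFinEquiv finProdFinEquiv).submatrix (·, j') (·, j)) := fun g => by
  have h := hT.kronecker_mul_submatrix g 1
  rw [map_one, map_one, Matrix.UnitaryGroup.one_val, Matrix.UnitaryGroup.one_val] at h
  rw [← submatrix_kronecker_one_mul, h, submatrix_mul_kronecker_one]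

lemma snd_block (hT : IsIntertwiner (extTensor ρ σ) (extTensor ρ' σ') T) (i' : Fin p')
    (i : Fin p) :
    IsIntertwiner σ σ'
      ((T.submatrix finProdFinEquiv finProdFinEquiv).submatrix (i', ·) (i, ·)) := fun k => by
  have h := hT.kronecker_mul_submatrix 1 k
  rw [map_one, map_one, Matrix.UnitaryGroup.one_val, Matrix.UnitaryGroup.one_val] at h
  rw [← submatrix_one_kronecker_mul, h, submatrix_mul_one_kronecker]

end IsIntertwiner

theorem extTensor_unitarilyEquivalent_unique_general
    (hρ : RepIrreducible ρ) (hσ : RepIrreducible σ)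
    (hρ' : RepIrreducible ρ') (hσ' : RepIrreducible σ')
    (hT : IsIntertwiner (extTensor ρ σ) (extTensor ρ' σ') T) (hT0 : T ≠ 0) :
    ∃ (hp : p = p') (hq : q = q'),
      UnitarilyEquivalent (transportRep hp ρ) ρ' ∧
      UnitarilyEquivalent (transportRep hq σ) σ' := by
  obtain ⟨⟨i', j'⟩, ⟨i, j⟩, hij⟩ :
      ∃ x y, T.submatrix finProdFinEquiv finProdFinEquiv x y ≠ 0 := by
    by_contra! h
    exact hT0 ((Matrix.reindex finProdFinEquiv.symm finProdFinEquiv.symm).injective (Matrix.ext h))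
  obtain ⟨hp, hρρ'⟩ := (hT.fst_block j' j).unitarilyEquivalent hρ hρ'
    fun h => hij (congrFun₂ h i' i)
  obtain ⟨hq, hσσ'⟩ := (hT.snd_block i' i).unitarilyEquivalent hσ hσ'
    fun h => hij (congrFun₂ h j' j)
  exact ⟨hp, hq, hρρ', hσσ'⟩

end ExtTensor

/-- The external tensor product decomposition of an irreducible unitary
representation of `G × H` is unique: if `ρ ⊠ σ` and `ρ' ⊠ σ'` are unitarily equivalent
(with all factors irreducible), then `p = p'`, `q = q'`, `ρ` is unitarily equivalent
to `ρ'` and `σ` is unitarily equivalent to `σ'`. -/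
theorem extTensor_unitarilyEquivalent_unique {G H : Type*} [Group G] [Group H]
    {p q p' q' : ℕ}
    (ρ : G →* Matrix.unitaryGroup (Fin p) ℂ) (σ : H →* Matrix.unitaryGroup (Fin q) ℂ)
    (ρ' : G →* Matrix.unitaryGroup (Fin p') ℂ) (σ' : H →* Matrix.unitaryGroup (Fin q') ℂ)
    (hρ : RepIrreducible ρ) (hσ : RepIrreducible σ)
    (hρ' : RepIrreducible ρ') (hσ' : RepIrreducible σ')
    (h : p * q = p' * q')
    (heq : UnitarilyEquivalent (transportRep h (extTensor ρ σ)) (extTensor ρ' σ')) :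
    ∃ (hp : p = p') (hq : q = q'),
      UnitarilyEquivalent (transportRep hp ρ) ρ' ∧
      UnitarilyEquivalent (transportRep hq σ) σ' := by
  obtain ⟨T, hT0, hT⟩ :=
    heq.exists_isIntertwiner_ne_zero (Nat.mul_pos hρ'.1 hσ'.1).ne' h
  exact extTensor_unitarilyEquivalent_unique_general hρ hσ hρ' hσ' hT hT0
end

section
/- Let G and H be groups, let V and W be nonzero finite-dimensional complex vector spaces, and let ρ : Representation ℂ G V and σ : Representation ℂ H W be representations. Let τ be the representation of G × H on V ⊗[ℂ] W given by τ (g, h) = TensorProduct.map (ρ g) (σ h). Then τ admits an invariant inner product if and only if ρ admits an invariant inner product and σ admits an invariant inner product. -/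
/-!
For a fixed nonzero `w`, the map `v ↦ v ⊗ w` is an injective `G`-equivariant embedding of `V` into
`V ⊗ W`, along which an invariant inner product pulls back; symmetrically for `W`. Conversely, `τ`
is the tensor product of the pullbacks of `ρ` and `σ` to `G × H`, and a tensor product of isometries
is an isometry for `⟪v ⊗ w, v' ⊗ w'⟫ = ⟪v, v'⟫ ⟪w, w'⟫`.
-/

open scoped TensorProduct

/-- A representation `ρ` of `G` on a complex vector space `V` admits an invariant inner
product: a conjugate-symmetric sesquilinear form (conjugate-linear in the first variable,
linear in the second), positive definite, preserved by every `ρ g`. -/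
def HasInvariantInner {G V : Type*} [Group G] [AddCommGroup V] [Module ℂ V]
    (ρ : Representation ℂ G V) : Prop :=
  ∃ B : V → V → ℂ,
    (∀ v w : V, B w v = (starRingEnd ℂ) (B v w)) ∧
    (∀ v w w' : V, B v (w + w') = B v w + B v w') ∧
    (∀ (c : ℂ) (v w : V), B v (c • w) = c * B v w) ∧
    (∀ v v' w : V, B (v + v') w = B v w + B v' w) ∧
    (∀ (c : ℂ) (v w : V), B (c • v) w = (starRingEnd ℂ) c * B v w) ∧
    (∀ v : V, v ≠ 0 → 0 < (B v v).re) ∧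
    (∀ (g : G) (v w : V), B (ρ g v) (ρ g w) = B v w)

section TensorProduct

variable {R M N : Type*} [CommSemiring R] [AddCommMonoid M] [AddCommMonoid N] [Module R M]
  [Module R N]

lemma tmul_left_injective_of_smul_injective [Module.Flat R M] {n : N}
    (hn : Function.Injective fun r : R ↦ r • n) : Function.Injective fun m : M ↦ m ⊗ₜ[R] n := by
  have hfactor : (fun m : M ↦ m ⊗ₜ[R] n) =
      (LinearMap.toSpanSingleton R N n).lTensor M ∘ (TensorProduct.rid R M).symm := by
    ext m
    simp
  rw [hfactor]
  exact (Module.Flat.lTensor_preserves_injective_linearMap _ hn).comp (LinearEquiv.injective _)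

lemma tmul_right_injective_of_smul_injective [Module.Flat R N] {m : M}
    (hm : Function.Injective fun r : R ↦ r • m) : Function.Injective fun n : N ↦ m ⊗ₜ[R] n :=
  (TensorProduct.comm R N M).injective.comp (tmul_left_injective_of_smul_injective hm)

end TensorProduct

section Representation

variable {G H V W : Type*} [Group G] [Group H] [AddCommGroup V] [Module ℂ V] [AddCommGroup W]
  [Module ℂ W]

lemma hasInvariantInner_iff_exists_core {ρ : Representation ℂ G V} :
    HasInvariantInner ρ ↔
      ∃ c : InnerProductSpace.Core ℂ V, ∀ g v w, c.inner (ρ g v) (ρ g w) = c.inner v w := by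
  constructor
  · rintro ⟨B, hsymm, -, hsmul_right, hadd_left, hsmul_left, hpos, hinv⟩
    refine ⟨{
      inner := B
      conj_inner_symm := fun v w ↦ (hsymm w v).symm
      re_inner_nonneg := fun v ↦ ?_
      add_left := hadd_left
      smul_left := fun v w c ↦ hsmul_left c v w
      definite := fun v hv ↦ ?_ }, hinv⟩
    · obtain rfl | hv := eq_or_ne v 0
      · have hzero : B 0 0 = 0 := by simpa using hsmul_right 0 0 0
        simp [hzero]
      · exact (hpos v hv).le
    · by_contra hne
      exact (hpos v hne).ne' (congrArg Complex.re hv)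
  · rintro ⟨c, hc⟩
    let _ : NormedAddCommGroup V := c.toNormedAddCommGroup
    let _ : InnerProductSpace ℂ V := .ofCore c.toCore
    exact ⟨inner ℂ, fun v w ↦ (inner_conj_symm w v).symm, inner_add_right,
      fun c v w ↦ inner_smul_right v w c, inner_add_left, fun c v w ↦ inner_smul_left v w c,
      fun v hv ↦ (re_inner_self_pos (𝕜 := ℂ)).mpr hv, hc⟩

namespace HasInvariantInner

lemma comp_monoidHom {ρ : Representation ℂ G V} (hρ : HasInvariantInner ρ) (φ : H →* G) :
    HasInvariantInner (MonoidHom.comp ρ φ) := by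
  obtain ⟨c, hc⟩ := hasInvariantInner_iff_exists_core.mp hρ
  exact hasInvariantInner_iff_exists_core.mpr ⟨c, fun h ↦ hc (φ h)⟩

lemma of_injective {ρ : Representation ℂ G V} {σ : Representation ℂ G W}
    (hσ : HasInvariantInner σ) (f : ρ.IntertwiningMap σ) (hf : Function.Injective f) :
    HasInvariantInner ρ := by
  obtain ⟨c, hc⟩ := hasInvariantInner_iff_exists_core.mp hσ
  have hpullback (g : G) (v w : V) :
      c.inner (f (ρ g v)) (f (ρ g w)) = c.inner (f v) (f w) := by
    rw [f.isIntertwining, f.isIntertwining, hc]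
  exact hasInvariantInner_iff_exists_core.mpr ⟨{
    inner := fun v w ↦ c.inner (f v) (f w)
    conj_inner_symm := fun v w ↦ c.conj_inner_symm (f v) (f w)
    re_inner_nonneg := fun v ↦ c.re_inner_nonneg (f v)
    add_left := fun u v w ↦ by rw [map_add, c.add_left]
    smul_left := fun v w r ↦ by rw [map_smul, c.smul_left]
    definite := fun v hv ↦ (map_eq_zero_iff f hf).mp (c.definite (f v) hv) }, hpullback⟩

lemma tprod {ρ : Representation ℂ G V} {σ : Representation ℂ G W}
    (hρ : HasInvariantInner ρ) (hσ : HasInvariantInner σ) : HasInvariantInner (ρ.tprod σ) := by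
  obtain ⟨cV, hcV⟩ := hasInvariantInner_iff_exists_core.mp hρ
  obtain ⟨cW, hcW⟩ := hasInvariantInner_iff_exists_core.mp hσ
  let _ : NormedAddCommGroup V := cV.toNormedAddCommGroup
  let _ : InnerProductSpace ℂ V := .ofCore cV.toCore
  let _ : NormedAddCommGroup W := cW.toNormedAddCommGroup
  let _ : InnerProductSpace ℂ W := .ofCore cW.toCore
  exact hasInvariantInner_iff_exists_core.mpr ⟨InnerProductSpace.toCore, fun g ↦
    TensorProduct.inner_map_map ((ρ g).isometryOfInner (hcV g)) ((σ g).isometryOfInner (hcW g))⟩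

variable {ρ : Representation ℂ G V} {σ : Representation ℂ H W}
  {τ : Representation ℂ (G × H) (V ⊗[ℂ] W)}

lemma of_tensor_left [Nontrivial W] (hτ : HasInvariantInner τ)
    (h : ∀ g, τ (g, 1) = (ρ g).rTensor W) : HasInvariantInner ρ := by
  obtain ⟨w, hw⟩ := exists_ne (0 : W)
  let f : ρ.IntertwiningMap (MonoidHom.comp τ (MonoidHom.inl G H)) :=
    ((TensorProduct.mk ℂ V W).flip w).intertwiningMap_of_isIntertwiningMap _ _
      fun g v ↦ by simp [h]
  exact (hτ.comp_monoidHom _).of_injective f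
    (tmul_left_injective_of_smul_injective (smul_left_injective ℂ hw))

lemma of_tensor_right [Nontrivial V] (hτ : HasInvariantInner τ)
    (h : ∀ k, τ (1, k) = (σ k).lTensor V) : HasInvariantInner σ := by
  obtain ⟨v, hv⟩ := exists_ne (0 : V)
  let f : σ.IntertwiningMap (MonoidHom.comp τ (MonoidHom.inr G H)) :=
    (TensorProduct.mk ℂ V W v).intertwiningMap_of_isIntertwiningMap _ _
      fun k w ↦ by simp [h]
  exact (hτ.comp_monoidHom _).of_injective f
    (tmul_right_injective_of_smul_injective (smul_left_injective ℂ hv))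

end HasInvariantInner

theorem tensor_hasInvariantInner_iff_general [Nontrivial V] [Nontrivial W]
    (ρ : Representation ℂ G V) (σ : Representation ℂ H W)
    (τ : Representation ℂ (G × H) (V ⊗[ℂ] W))
    (hτ : ∀ (g : G) (h : H), τ (g, h) = TensorProduct.map (ρ g) (σ h)) :
    HasInvariantInner τ ↔ HasInvariantInner ρ ∧ HasInvariantInner σ := by
  constructor
  · intro h
    exact ⟨h.of_tensor_left fun g ↦ by rw [hτ, map_one, Module.End.one_eq_id, LinearMap.rTensor],
      h.of_tensor_right fun k ↦ by rw [hτ, map_one, Module.End.one_eq_id, LinearMap.lTensor]⟩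
  · rintro ⟨hρ, hσ⟩
    have hτ_tprod : τ = Representation.tprod (MonoidHom.comp ρ (MonoidHom.fst G H))
        (MonoidHom.comp σ (MonoidHom.snd G H)) :=
      MonoidHom.ext fun x ↦ hτ x.1 x.2
    rw [hτ_tprod]
    exact (hρ.comp_monoidHom _).tprod (hσ.comp_monoidHom _)

end Representation

/-- For nonzero finite-dimensional representations `ρ` of `G` on `V` and
`σ` of `H` on `W`, the tensor-product representation of `G × H` on `V ⊗[ℂ] W` admits an
invariant inner product if and only if both `ρ` and `σ` do. -/
theorem tensor_hasInvariantInner_iff {G H V W : Type*} [Group G] [Group H]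
    [AddCommGroup V] [Module ℂ V] [AddCommGroup W] [Module ℂ W]
    [Nontrivial V] [Nontrivial W] [FiniteDimensional ℂ V] [FiniteDimensional ℂ W]
    (ρ : Representation ℂ G V) (σ : Representation ℂ H W)
    (τ : Representation ℂ (G × H) (V ⊗[ℂ] W))
    (hτ : ∀ (g : G) (h : H), τ (g, h) = TensorProduct.map (ρ g) (σ h)) :
    HasInvariantInner τ ↔ HasInvariantInner ρ ∧ HasInvariantInner σ :=
  tensor_hasInvariantInner_iff_general ρ σ τ hτ
end

section
/- Let G be a group, n ≥ 1, and let ρ : G →* Matrix.unitaryGroup (Fin n) ℂ be a unitary representation. Then ρ is reducible (i.e., there exists an invariant ℂ-submodule W of ℂⁿ with W ≠ ⊥ and W ≠ ⊤) if and only if there exists A ∈ Matrix.unitaryGroup (Fin n) ℂ such that (A : Matrix (Fin n) (Fin n) ℂ) * (ρ g).val = (ρ g).val * (A : Matrix (Fin n) (Fin n) ℂ) for all g ∈ G and A is not a scalar matrix, i.e., there is no λ ∈ ℂ with (A : Matrix (Fin n) (Fin n) ℂ) = λ • 1. (Thus the subspace Sum(G,n) of reducible representations in Hom(G, U(n)) is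 exactly the set of points at which the conjugation action of PU(n) fails to be free.) -/
/-!
The reflection in an invariant subspace `U` commutes with the representation, because unitarity
makes `Uᗮ` invariant too; it is unitary, and a scalar only if `U` is `⊥` or `⊤`. Conversely, as in
Schur's lemma, a matrix commuting with the representation has an eigenvalue because `ℂ` is
algebraically closed; the eigenspace is invariant, and it is proper unless the matrix is a scalar.
-/

open Matrix Kronecker

/-- A unitary representation is reducible if it has an invariant submodule other than
`⊥` and `⊤`. -/
def RepReducible {G : Type*} [Group G] {n : ℕ}
    (ρ : G →* Matrix.unitaryGroup (Fin n) ℂ) : Prop :=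
  ∃ W : Submodule ℂ (Fin n → ℂ), RepInvariant ρ W ∧ W ≠ ⊥ ∧ W ≠ ⊤

section InvariantSubspace

open Module.End

theorem exists_proper_mem_invtSubmodule_of_nonscalar {K V : Type*} [Field K] [IsAlgClosed K]
    [AddCommGroup V] [Module K V] [FiniteDimensional K V] {f : Module.End K V}
    (hf : ¬∃ c : K, f = c • 1) :
    ∃ W : Submodule K V, W ≠ ⊥ ∧ W ≠ ⊤ ∧ ∀ g, Commute f g → W ∈ invtSubmodule g := by
  have : Nontrivial V :=
    not_subsingleton_iff_nontrivial.mp fun _ => hf ⟨0, Subsingleton.elim _ _⟩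
  obtain ⟨c, hc⟩ := exists_eigenvalue f
  refine ⟨eigenspace f c, hc, fun htop => hf ⟨c, LinearMap.ext fun v => ?_⟩,
    fun g hfg => mapsTo_genEigenspace_of_comm hfg c 1⟩
  exact mem_eigenspace_iff.mp (htop ▸ Submodule.mem_top)

end InvariantSubspace

section Reflection

open Module.End

variable {𝕜 E : Type*} [RCLike 𝕜] [NormedAddCommGroup E] [InnerProductSpace 𝕜 E]
  {U : Submodule 𝕜 E} [U.HasOrthogonalProjection]

theorem commute_starProjection_iff [CompleteSpace E] {T : E →L[𝕜] E} :
    Commute U.starProjection T ↔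
      U ∈ invtSubmodule T.toLinearMap ∧ U ∈ invtSubmodule (star T).toLinearMap := by
  rw [ContinuousLinearMap.IsIdempotentElem.commute_iff U.isIdempotentElem_starProjection,
    Submodule.range_starProjection, Submodule.ker_starProjection,
    ContinuousLinearMap.star_eq_adjoint, ContinuousLinearMap.mem_invtSubmodule_adjoint_iff]

theorem coe_reflection_eq_two_mul_starProjection_sub_one :
    (U.reflection : E →L[𝕜] E) = 2 * U.starProjection - 1 := by
  ext x
  simp [Submodule.reflection_apply, two_mul, two_smul]

theorem commute_reflection_of_mem_invtSubmodule [CompleteSpace E] {T : E →L[𝕜] E}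
    (hT : U ∈ invtSubmodule T.toLinearMap) (hT' : U ∈ invtSubmodule (star T).toLinearMap) :
    Commute (U.reflection : E →L[𝕜] E) T := by
  rw [coe_reflection_eq_two_mul_starProjection_sub_one]
  exact ((Commute.ofNat_left 2 T).mul_left (commute_starProjection_iff.mpr ⟨hT, hT'⟩)).sub_left
    (Commute.one_left T)

theorem eq_top_of_reflection_eq_smul_one (hU : U ≠ ⊥) {c : 𝕜}
    (h : (U.reflection : E →L[𝕜] E) = c • 1) : U = ⊤ := by
  have reflection_eq (x : E) : U.reflection x = c • x := congr($h x)
  obtain ⟨u, hu, hu0⟩ := U.exists_mem_ne_zero_of_ne_bot hU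
  have hc : c = 1 := by
    have hcu : c • u = (1 : 𝕜) • u := by
      rw [← reflection_eq, Submodule.reflection_mem_subspace_eq_self hu, one_smul]
    exact smul_left_injective 𝕜 hu0 hcu
  refine Submodule.eq_top_iff'.mpr fun x => (Submodule.reflection_eq_self_iff x).mp ?_
  rw [reflection_eq, hc, one_smul]

end Reflection

section Matrix

open Module.End

variable {𝕜 n : Type*} [RCLike 𝕜] [Fintype n] [DecidableEq n]

theorem map_toLp_mem_invtSubmodule_toEuclideanCLM_iff {W : Submodule 𝕜 (n → 𝕜)}
    {B : Matrix n n 𝕜} :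
    W.map (WithLp.linearEquiv 2 𝕜 (n → 𝕜)).symm.toLinearMap ∈
        invtSubmodule (toEuclideanCLM (n := n) (𝕜 := 𝕜) B).toLinearMap ↔
      W ∈ invtSubmodule (toLin' B) :=
  LinearEquiv.map_mem_invtSubmodule_iff

theorem exists_nonscalar_mem_unitaryGroup_commute {W : Submodule 𝕜 (n → 𝕜)}
    (hbot : W ≠ ⊥) (htop : W ≠ ⊤) :
    ∃ A ∈ unitaryGroup n 𝕜, (¬∃ c : 𝕜, A = c • 1) ∧
      ∀ B, W ∈ invtSubmodule (toLin' B) → W ∈ invtSubmodule (toLin' (star B)) → Commute A B := by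
  let e := toEuclideanCLM (n := n) (𝕜 := 𝕜)
  let ι := (WithLp.linearEquiv 2 𝕜 (n → 𝕜)).symm
  let U : Submodule 𝕜 (EuclideanSpace 𝕜 n) := W.map ι.toLinearMap
  let R := Unitary.linearIsometryEquiv.symm U.reflection
  refine ⟨e.symm R, Unitary.map_mem e.symm R.2, ?_, fun B hB hB' => ?_⟩
  · rintro ⟨c, hc⟩
    have hR : (U.reflection : EuclideanSpace 𝕜 n →L[𝕜] EuclideanSpace 𝕜 n) = c • 1 := by
      rw [← Unitary.coe_symm_linearIsometryEquiv_apply, ← e.apply_symm_apply R, hc, map_smul,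
        map_one]
    have hUbot : U ≠ ⊥ := Submodule.map_eq_bot_iff.not.mpr hbot
    have hUtop : U ≠ ⊤ := Submodule.map_eq_top_iff.not.mpr htop
    exact hUtop (eq_top_of_reflection_eq_smul_one hUbot hR)
  · have hcomm : Commute (U.reflection : EuclideanSpace 𝕜 n →L[𝕜] EuclideanSpace 𝕜 n) (e B) :=
      commute_reflection_of_mem_invtSubmodule
        (map_toLp_mem_invtSubmodule_toEuclideanCLM_iff.mpr hB)
        (by rw [← map_star]; exact map_toLp_mem_invtSubmodule_toEuclideanCLM_iff.mpr hB')
    exact e.symm_apply_apply B ▸ hcomm.map e.symm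

end Matrix

section RepInvariant

open Module.End

variable {G : Type*} [Group G] {n : ℕ} {ρ : G →* unitaryGroup (Fin n) ℂ}
  {W : Submodule ℂ (Fin n → ℂ)}

theorem repInvariant_iff_forall_mem_invtSubmodule :
    RepInvariant ρ W ↔ ∀ g, W ∈ invtSubmodule (toLin' (ρ g).val) :=
  Iff.rfl

theorem RepInvariant.mem_invtSubmodule_star (hW : RepInvariant ρ W) (g : G) :
    W ∈ invtSubmodule (toLin' (star (ρ g).val)) := by
  rw [← UnitaryGroup.inv_val, ← map_inv]
  exact repInvariant_iff_forall_mem_invtSubmodule.mp hW g⁻¹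

end RepInvariant

/-- A unitary representation is reducible if and only if some unitary
matrix that is not a scalar matrix commutes with the whole image of the representation;
i.e. the reducible locus is exactly where the conjugation `PU(n)`-action fails to be
free. -/
theorem repReducible_iff_exists_nonscalar_commutant {G : Type*} [Group G] {n : ℕ}
    (hn : 1 ≤ n) (ρ : G →* Matrix.unitaryGroup (Fin n) ℂ) :
    RepReducible ρ ↔
      ∃ A : Matrix.unitaryGroup (Fin n) ℂ,
        (∀ g : G, (A : Matrix (Fin n) (Fin n) ℂ) * (ρ g).val
          = (ρ g).val * (A : Matrix (Fin n) (Fin n) ℂ)) ∧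
        ¬ ∃ lam : ℂ, (A : Matrix (Fin n) (Fin n) ℂ) = lam • (1 : Matrix (Fin n) (Fin n) ℂ) := by
  constructor
  · rintro ⟨W, hW, hbot, htop⟩
    obtain ⟨A, hA, hscalar, hcomm⟩ :=
      exists_nonscalar_mem_unitaryGroup_commute hbot htop
    refine ⟨⟨A, hA⟩, fun g => (hcomm (ρ g).val ?_ ?_).eq, hscalar⟩
    · exact repInvariant_iff_forall_mem_invtSubmodule.mp hW g
    · exact hW.mem_invtSubmodule_star g
  · rintro ⟨A, hcomm, hscalar⟩
    have htoLin : ¬∃ c : ℂ, toLin' A.val = c • 1 := by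
      rintro ⟨c, hc⟩
      exact hscalar ⟨c, toLin'.injective (by rw [hc, map_smul, toLin'_one, Module.End.one_eq_id])⟩
    obtain ⟨W, hbot, htop, hW⟩ := exists_proper_mem_invtSubmodule_of_nonscalar htoLin
    refine ⟨W, repInvariant_iff_forall_mem_invtSubmodule.mpr fun g => hW _ ?_, hbot, htop⟩
    exact Commute.map (hcomm g) toLinAlgEquiv'
end
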